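/- arXiv:1910.12450 — 7 statements merged into one kernel-verified Lean document; each statement's English description precedes it below -/
import Mathlib

section
/- Let X ⊆ ℝ^m and Y ⊆ ℝ^n be nonempty, compact, and convex sets, and let h : ℝ^m → ℝ be an affine function (h(x) = ⟨a,x⟩ + b) with h(x) ≥ 0 for all x ∈ X. Then the scaled extension X ⊴^h Y is nonempty, compact, and convex. -/
/-- The scaled extension of `X ⊆ ℝ^m` with `Y ⊆ ℝ^n` via `h : ℝ^m → ℝ`,
namely `X ⊴^h Y = {(x, h(x) • y) : x ∈ X, y ∈ Y}`. -/
def scaledExt {m n : ℕ} (X : Set (Fin m → ℝ)) (Y : Set (Fin n → ℝ))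
    (h : (Fin m → ℝ) → ℝ) : Set ((Fin m → ℝ) × (Fin n → ℝ)) :=
  {p | ∃ x ∈ X, ∃ y ∈ Y, p = (x, h x • y)}

/-!
The fibre of the scaled extension over `x ∈ X` is the dilate `h x • Y`. For convex `Y` and
nonnegative scalars, dilates add: `(p + q) • Y = p • Y + q • Y`. Since `h` is affine on `X`, a
convex combination of points in the fibres over `x` and `x'` therefore lies in the fibre over the
corresponding combination of `x` and `x'`; no division by `h` is involved, so its zeros need no
separate treatment.
-/

section ScaledExtension

open scoped Pointwise

variable {𝕜 E F : Type*}

/-- The scaled extension of `X` with `Y` via `h`, for subsets of arbitrary spaces `E` and `F` and a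
scale function `h` with values in the scalars. It is encoded as the image of `X ×ˢ Y` under
`(x, y) ↦ (x, h x • y)`, so that compactness passes from `X ×ˢ Y` to it. -/
def scaledExtension [SMul 𝕜 F] (X : Set E) (Y : Set F) (h : E → 𝕜) : Set (E × F) :=
  (fun p : E × F ↦ (p.1, h p.1 • p.2)) '' X ×ˢ Y

theorem scaledExt_eq_scaledExtension {m n : ℕ} (X : Set (Fin m → ℝ)) (Y : Set (Fin n → ℝ))
    (h : (Fin m → ℝ) → ℝ) : scaledExt X Y h = scaledExtension X Y h := by
  ext p
  simp only [scaledExt, scaledExtension, Set.mem_ofPred_eq, Set.mem_image, Prod.exists,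
    Set.mem_prod, and_assoc, exists_and_left, eq_comm]

theorem mem_scaledExtension_iff [SMul 𝕜 F] {X : Set E} {Y : Set F} {h : E → 𝕜} {p : E × F} :
    p ∈ scaledExtension X Y h ↔ p.1 ∈ X ∧ p.2 ∈ h p.1 • Y := by
  constructor
  · rintro ⟨⟨x, y⟩, ⟨hx, hy⟩, rfl⟩
    exact ⟨hx, Set.smul_mem_smul_set hy⟩
  · rintro ⟨hx, y, hy, hxy⟩
    exact ⟨(p.1, y), ⟨hx, hy⟩, Prod.ext rfl hxy⟩

theorem nonempty_scaledExtension [SMul 𝕜 F] {X : Set E} {Y : Set F} (hX : X.Nonempty)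
    (hY : Y.Nonempty) (h : E → 𝕜) : (scaledExtension X Y h).Nonempty :=
  (hX.prod hY).image _

theorem isCompact_scaledExtension [SMul 𝕜 F] [TopologicalSpace 𝕜] [TopologicalSpace E]
    [TopologicalSpace F] [ContinuousSMul 𝕜 F] {X : Set E} {Y : Set F} {h : E → 𝕜}
    (hX : IsCompact X) (hY : IsCompact Y) (hcont : ContinuousOn h X) :
    IsCompact (scaledExtension X Y h) := by
  have hscale : ContinuousOn (fun p : E × F ↦ h p.1) (X ×ˢ Y) :=
    hcont.comp continuousOn_fst fun _ hp ↦ hp.1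
  exact (hX.prod hY).image_of_continuousOn
    (continuousOn_fst.prodMk (hscale.smul continuousOn_snd))

variable [Field 𝕜] [LinearOrder 𝕜] [IsStrictOrderedRing 𝕜] [AddCommMonoid E] [SMul 𝕜 E]
  [AddCommGroup F] [Module 𝕜 F] {X : Set E} {Y : Set F} {h : E → 𝕜}

theorem convex_scaledExtension (hY : Convex 𝕜 Y) (hconvex : ConvexOn 𝕜 X h)
    (hconcave : ConcaveOn 𝕜 X h) (hnonneg : ∀ x ∈ X, 0 ≤ h x) :
    Convex 𝕜 (scaledExtension X Y h) := by
  rintro ⟨x, u⟩ hxu ⟨x', u'⟩ hxu' s t hs ht hst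
  rw [mem_scaledExtension_iff] at hxu hxu' ⊢
  obtain ⟨hx, hu⟩ := hxu
  obtain ⟨hx', hu'⟩ := hxu'
  have h_affine : h (s • x + t • x') = s * h x + t * h x' :=
    (hconvex.2 hx hx' hs ht hst).antisymm (hconcave.2 hx hx' hs ht hst)
  have h_fibre : h (s • x + t • x') • Y = s • h x • Y + t • h x' • Y := by
    rw [h_affine, hY.add_smul (mul_nonneg hs (hnonneg x hx)) (mul_nonneg ht (hnonneg x' hx')),
      mul_smul, mul_smul]
  refine ⟨hconvex.1 hx hx' hs ht hst, ?_⟩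
  change s • u + t • u' ∈ h (s • x + t • x') • Y
  rw [h_fibre]
  exact Set.add_mem_add (Set.smul_mem_smul_set hu) (Set.smul_mem_smul_set hu')

-- Being affine on `X` is expressed as being both convex and concave on `X`.
theorem scaledExt_nonempty_isCompact_convex_general [TopologicalSpace 𝕜] [TopologicalSpace E]
    [TopologicalSpace F] [ContinuousSMul 𝕜 F] (hXne : X.Nonempty) (hXc : IsCompact X)
    (hYne : Y.Nonempty) (hYc : IsCompact Y) (hYconv : Convex 𝕜 Y) (hcont : ContinuousOn h X)
    (hconvex : ConvexOn 𝕜 X h) (hconcave : ConcaveOn 𝕜 X h) (hnonneg : ∀ x ∈ X, 0 ≤ h x) :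
    (scaledExtension X Y h).Nonempty ∧ IsCompact (scaledExtension X Y h) ∧
      Convex 𝕜 (scaledExtension X Y h) :=
  ⟨nonempty_scaledExtension hXne hYne h, isCompact_scaledExtension hXc hYc hcont,
    convex_scaledExtension hYconv hconvex hconcave hnonneg⟩

end ScaledExtension

theorem scaledExt_nonempty_isCompact_convex {m n : ℕ}
    (X : Set (Fin m → ℝ)) (Y : Set (Fin n → ℝ))
    (a : Fin m → ℝ) (b : ℝ) (h : (Fin m → ℝ) → ℝ)
    (hdef : ∀ x, h x = (∑ i, a i * x i) + b)
    (hXne : X.Nonempty) (hXc : IsCompact X) (hXconv : Convex ℝ X)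
    (hYne : Y.Nonempty) (hYc : IsCompact Y) (hYconv : Convex ℝ Y)
    (hnn : ∀ x ∈ X, 0 ≤ h x) :
    (scaledExt X Y h).Nonempty ∧ IsCompact (scaledExt X Y h) ∧
      Convex ℝ (scaledExt X Y h) := by
  obtain ⟨f, rfl⟩ : ∃ f : (Fin m → ℝ) →ₗ[ℝ] ℝ, h = ⇑f + fun _ ↦ b :=
    ⟨dotProductBilin ℝ ℝ a, funext hdef⟩
  rw [scaledExt_eq_scaledExtension]
  exact scaledExt_nonempty_isCompact_convex_general hXne hXc hYne hYc hYconv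
    (f.continuous_of_finiteDimensional.add continuous_const).continuousOn
    ((f.convexOn hXconv).add_const b) ((f.concaveOn hXconv).add_const b) hnn
end

section
/- Let X ⊆ ℝ^m and Y ⊆ ℝ^n be nonempty convex sets, and let h : ℝ^m → ℝ be an affine function (h(x) = ⟨a,x⟩ + b) with h(x) ≥ 0 for all x ∈ X. Then the scaled extension X ⊴^h Y is convex. -/
theorem scaledExt_convex_general {𝕜 E F : Type*}
    [Field 𝕜] [LinearOrder 𝕜] [IsStrictOrderedRing 𝕜]
    [AddCommGroup E] [Module 𝕜 E] [AddCommGroup F] [Module 𝕜 F]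
    {X : Set E} {Y : Set F} (h : E →ᵃ[𝕜] 𝕜)
    (hX : Convex 𝕜 X) (hY : Convex 𝕜 Y) (h_nonneg : ∀ x ∈ X, 0 ≤ h x) :
    Convex 𝕜 {p : E × F | ∃ x ∈ X, ∃ y ∈ Y, p = (x, h x • y)} := by
  rintro _ ⟨x₁, hx₁, y₁, hy₁, rfl⟩ _ ⟨x₂, hx₂, y₂, hy₂, rfl⟩ s t hs ht hst
  have h_combo : h (s • x₁ + t • x₂) = s * h x₁ + t * h x₂ :=
    Convex.combo_affine_apply hst
  -- `y` is the average of `y₁` and `y₂` with weights proportional to `s * h x₁` and `t * h x₂`;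
  -- if both weights vanish, any point of `Y` will do.
  obtain ⟨y, hy, hy_eq⟩ :
      ∃ y ∈ Y, (s * h x₁ + t * h x₂) • y = (s * h x₁) • y₁ + (t * h x₂) • y₂ :=
    hY.exists_mem_add_smul_eq hy₁ hy₂
      (mul_nonneg hs (h_nonneg x₁ hx₁)) (mul_nonneg ht (h_nonneg x₂ hx₂))
  have snd_eq : s • h x₁ • y₁ + t • h x₂ • y₂ = h (s • x₁ + t • x₂) • y := by
    rw [h_combo, hy_eq, mul_smul, mul_smul]
  exact ⟨s • x₁ + t • x₂, hX hx₁ hx₂ hs ht hst, y, hy, Prod.ext rfl snd_eq⟩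

theorem scaledExt_convex {m n : ℕ}
    (X : Set (Fin m → ℝ)) (Y : Set (Fin n → ℝ))
    (a : Fin m → ℝ) (b : ℝ) (h : (Fin m → ℝ) → ℝ)
    (hdef : ∀ x, h x = (∑ i, a i * x i) + b)
    (hXne : X.Nonempty) (hXconv : Convex ℝ X)
    (hYne : Y.Nonempty) (hYconv : Convex ℝ Y)
    (hnn : ∀ x ∈ X, 0 ≤ h x) :
    Convex ℝ (scaledExt X Y h) := by
  let g : (Fin m → ℝ) →ᵃ[ℝ] ℝ := (dotProductBilin ℝ ℝ a).toAffineMap + AffineMap.const ℝ _ b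
  obtain rfl : h = g := funext hdef
  exact scaledExt_convex_general g hXconv hYconv hnn
end

section
/- Let X ⊆ ℝ^m be a nonempty closed set, let Y ⊆ ℝ^n be a nonempty compact set, and let h : ℝ^m → ℝ be a continuous function with h(x) ≥ 0 for all x ∈ X. Then the scaled extension X ⊴^h Y is a closed subset of ℝ^m × ℝ^n. -/
open Function Set

-- The set is the projection of the closed graph of `f` along the compact factor `t`.
theorem isClosed_image2_prodMk_of_isCompact {α β γ : Type*} [TopologicalSpace α]
    [TopologicalSpace β] [TopologicalSpace γ] [T2Space γ] {s : Set α} {t : Set β} {f : α → β → γ}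
    (hs : IsClosed s) (ht : IsCompact t) (hf : ContinuousOn (uncurry f) (s ×ˢ t)) :
    IsClosed (image2 (fun x y ↦ (x, f x y)) s t) := by
  have : CompactSpace t := isCompact_iff_compactSpace.mp ht
  let graph : Set ((α × γ) × t) := {q | q.1.1 ∈ s ∧ q.1.2 = f q.1.1 q.2}
  have graph_isClosed : IsClosed graph := by
    have hf_graph : ContinuousOn (fun q : (α × γ) × t ↦ f q.1.1 q.2) {q | q.1.1 ∈ s} :=
      hf.comp (f := fun q : (α × γ) × t ↦ (q.1.1, (q.2 : β))) (by fun_prop)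
        fun q hq ↦ ⟨hq, q.2.2⟩
    exact (hs.preimage (by fun_prop)).isClosed_eq (by fun_prop) hf_graph
  have image2_eq : image2 (fun x y ↦ (x, f x y)) s t = Prod.fst '' graph := by
    ext ⟨x, z⟩
    simp [graph, eq_comm, and_left_comm]
  rw [image2_eq]
  exact isClosedMap_fst_of_compactSpace graph graph_isClosed

theorem scaledExt_isClosed_general {α M E : Type*} [TopologicalSpace α] [TopologicalSpace M]
    [TopologicalSpace E] [T2Space E] [SMul M E] [ContinuousSMul M E]
    {X : Set α} {Y : Set E} {h : α → M}
    (hX : IsClosed X) (hY : IsCompact Y) (hcont : ContinuousOn h X) :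
    IsClosed {p : α × E | ∃ x ∈ X, ∃ y ∈ Y, p = (x, h x • y)} := by
  have hsmul : ContinuousOn (uncurry fun x y ↦ h x • y) (X ×ˢ Y) :=
    (hcont.comp continuousOn_fst fun _ hp ↦ hp.1).smul continuousOn_snd
  simpa only [image2, eq_comm] using isClosed_image2_prodMk_of_isCompact hX hY hsmul

theorem scaledExt_isClosed {m n : ℕ}
    (X : Set (Fin m → ℝ)) (Y : Set (Fin n → ℝ)) (h : (Fin m → ℝ) → ℝ)
    (hXne : X.Nonempty) (hXcl : IsClosed X)
    (hYne : Y.Nonempty) (hYc : IsCompact Y)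
    (hcont : Continuous h) (hnn : ∀ x ∈ X, 0 ≤ h x) :
    IsClosed (scaledExt X Y h) :=
  scaledExt_isClosed_general hXcl hYc hcont.continuousOn
end

section
/- Let X ⊆ ℝ^m and Y ⊆ ℝ^n be nonempty compact sets, let h : ℝ^m → ℝ be given by h(x) = ⟨a,x⟩ + b with h(x) ≥ 0 for all x ∈ X, and let Z = X ⊴^h Y be the scaled extension. Then for any ℓ = (ℓ_x, ℓ_y) ∈ ℝ^m × ℝ^n, the minimum over z ∈ Z of ⟨ℓ, z⟩ equals (min over x ∈ X of ⟨ℓ_x + (min over y ∈ Y of ⟨ℓ_y, y⟩)·a, x⟩) + b · (min over y ∈ Y of ⟨ℓ_y, y⟩). -/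
/-- Euclidean inner product on `ℝ^k`. -/
def dot {k : ℕ} (u v : Fin k → ℝ) : ℝ := ∑ i, u i * v i

/-!
Minimise over `Z` in two stages. For fixed `x ∈ X` the scale `h x` is nonnegative, so the infimum
over `Y` of `⟨ℓ_y, h x • y⟩ = h x * ⟨ℓ_y, y⟩` is `h x * q`, where `q` is the infimum of `⟨ℓ_y, ·⟩`
on `Y`. What is left to minimise over `X` is `⟨ℓ_x, x⟩ + (⟨a, x⟩ + b) * q`, whose constant part
`b * q` comes out of the infimum.
-/

section InfimumInStages

variable {E F : Type*}

theorem isGLB_image2_iff_of_isGLB {P : Type*} [Preorder P] {X : Set E} {Y : Set F}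
    {φ : E → F → P} {u : E → P} (hu : ∀ x ∈ X, IsGLB (φ x '' Y) (u x)) {r : P} :
    IsGLB (Set.image2 φ X Y) r ↔ IsGLB (u '' X) r := by
  rw [← Set.iUnion_image_left, Set.biUnion_eq_iUnion, Set.image_eq_range]
  exact (isGLB_iUnion_iff_of_isGLB (fun x : X => hu x x.2) r).symm

variable {K : Type*} [Field K] [LinearOrder K] [IsStrictOrderedRing K]

theorem isGLB_image_const_add_mul {Y : Set F} {g : F → K} {q : K} (hq : IsGLB (g '' Y) q)
    (s : K) {c : K} (hc : 0 ≤ c) :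
    IsGLB ((fun y => s + c * g y) '' Y) (s + c * q) := by
  have hmul : IsGLB ((fun y => c * g y) '' Y) (c * q) := by
    simpa only [Set.image_image] using hq.mul_left hc
  simpa only [Set.image_image, OrderIso.addLeft_apply] using
    (OrderIso.addLeft s).isGLB_image'.2 hmul

theorem isGLB_image2_add_mul_iff {X : Set E} {Y : Set F} {f h : E → K} {g : F → K} {q r : K}
    (hnn : ∀ x ∈ X, 0 ≤ h x) (hq : IsGLB (g '' Y) q) :
    IsGLB (Set.image2 (fun x y => f x + h x * g y) X Y) r ↔
      IsGLB ((fun x => f x + h x * q) '' X) r :=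
  isGLB_image2_iff_of_isGLB fun x hx => isGLB_image_const_add_mul hq (f x) (hnn x hx)

end InfimumInStages

theorem min_linear_over_scaledExt_general {E F : Type*} [AddCommMonoid F] [Module ℝ F]
    {X : Set E} {Y : Set F} {a h : E → ℝ} {b : ℝ} (hdef : ∀ x, h x = a x + b)
    (hXne : X.Nonempty) (hYne : Y.Nonempty) (hnn : ∀ x ∈ X, 0 ≤ h x)
    (f : E → ℝ) (g : F →ₗ[ℝ] ℝ) (hY : BddBelow (g '' Y))
    (hX : BddBelow ((fun x => f x + sInf (g '' Y) * a x) '' X)) :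
    sInf ((fun z : E × F => f z.1 + g z.2) '' Set.image2 (fun x y => (x, h x • y)) X Y) =
      sInf ((fun x => f x + sInf (g '' Y) * a x) '' X) + b * sInf (g '' Y) := by
  set q := sInf (g '' Y)
  have hq : IsGLB (g '' Y) q := isGLB_csInf (hYne.image g) hY
  have hr := (OrderIso.addRight (b * q)).isGLB_image'.2 (isGLB_csInf (hXne.image _) hX)
  have hsplit (x : E) : f x + h x * q = f x + q * a x + b * q := by rw [hdef]; ring
  simp only [Set.image_image2, map_smul, smul_eq_mul]
  refine ((isGLB_image2_add_mul_iff hnn hq).2 ?_).csInf_eq (hXne.image2 hYne)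
  simpa only [Set.image_image, OrderIso.addRight_apply, hsplit] using hr

section Coordinates

variable {k : ℕ}

theorem continuous_dot (u : Fin k → ℝ) : Continuous (dot u) := by
  unfold dot
  fun_prop

theorem dot_eq_dotProductBilin (u : Fin k → ℝ) : dot u = dotProductBilin ℝ ℝ u :=
  rfl

theorem dot_add_smul_left (u a v : Fin k → ℝ) (c : ℝ) :
    dot (u + c • a) v = dot u v + c * dot a v := by
  simp only [dot_eq_dotProductBilin, map_add, map_smul, LinearMap.add_apply,
    LinearMap.smul_apply, smul_eq_mul]

theorem bddBelow_image_dot {X : Set (Fin k → ℝ)} (hX : IsCompact X) (u : Fin k → ℝ) :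
    BddBelow (dot u '' X) :=
  hX.bddBelow_image (continuous_dot u).continuousOn

theorem scaledExt_eq_image2 {m n : ℕ} (X : Set (Fin m → ℝ)) (Y : Set (Fin n → ℝ))
    (h : (Fin m → ℝ) → ℝ) :
    scaledExt X Y h = Set.image2 (fun x y => (x, h x • y)) X Y := by
  simp only [scaledExt, Set.image2, eq_comm]

end Coordinates

theorem min_linear_over_scaledExt {m n : ℕ}
    (X : Set (Fin m → ℝ)) (Y : Set (Fin n → ℝ))
    (a : Fin m → ℝ) (b : ℝ) (h : (Fin m → ℝ) → ℝ)
    (hdef : ∀ x, h x = dot a x + b)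
    (hXne : X.Nonempty) (hXc : IsCompact X)
    (hYne : Y.Nonempty) (hYc : IsCompact Y)
    (hnn : ∀ x ∈ X, 0 ≤ h x)
    (ℓx : Fin m → ℝ) (ℓy : Fin n → ℝ) :
    sInf ((fun z : (Fin m → ℝ) × (Fin n → ℝ) => dot ℓx z.1 + dot ℓy z.2) ''
        scaledExt X Y h)
      = sInf ((fun x => dot (ℓx + sInf ((fun y => dot ℓy y) '' Y) • a) x) '' X)
        + b * sInf ((fun y => dot ℓy y) '' Y) := by
  have hbdd := bddBelow_image_dot hXc (ℓx + sInf (dot ℓy '' Y) • a)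
  simp only [scaledExt_eq_image2, dot_add_smul_left] at hbdd ⊢
  exact min_linear_over_scaledExt_general hdef hXne hYne hnn (dot ℓx) (dotProductBilin ℝ ℝ ℓy)
    (bddBelow_image_dot hYc ℓy) hbdd
end

section
/- Let X ⊆ ℝ^m and Y ⊆ ℝ^n be nonempty compact convex sets and A an m×n real matrix. Fix T ≥ 1 and points x^1,…,x^T ∈ X, y^1,…,y^T ∈ Y. Define the average decisions x̄ := (1/T) Σ_{t=1}^T x^t and ȳ := (1/T) Σ_{t=1}^T y^t, the cumulative regrets R_X^T := Σ_{t=1}^T ⟨−A y^t, x^t⟩ − min_{x̂ ∈ X} Σ_{t=1}^T ⟨−A y^t, x̂⟩ and R_Y^T := Σ_{t=1}^T ⟨Aᵀ x^t, y^t⟩ − min_{ŷ ∈ Y} Σ_{t=1}^T ⟨Aᵀ x^t, ŷ⟩, and the saddle-point gap γ(x̄, ȳ) := max_{x̂ ∈ X} ⟨x̂, A ȳ⟩ − min_{ŷ ∈ Y} ⟨x̄, A ŷ⟩. Then γ(x̄, ȳ) ≤ (R_X^T + R_Y^T)/T. -/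
/-!
The two players' losses sum to zero in every round, so the realized losses cancel in the sum of the
two regrets. By bilinearity the cumulative loss of a fixed decision is `T` times its loss against
the opponent's average decision, so the two best responses that remain form `T` times the gap.
-/

section BilinearGame

open Finset

variable {ι E F : Type*}

/-- The cumulative regret of the decisions `x t`, `t ∈ s`, under the losses `ℓ t`, against the best
fixed decision in `X`. The best loss is encoded as an infimum, so it is meaningful only when `X` is
nonempty and the cumulative loss is bounded below on `X`. -/
noncomputable def cumulativeRegret (s : Finset ι) (ℓ : ι → E → ℝ) (X : Set E) (x : ι → E) : ℝ :=
  ∑ t ∈ s, ℓ t (x t) - sInf ((fun z => ∑ t ∈ s, ℓ t z) '' X)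

/-- The saddle-point gap at `(x, y)` of the game with payoff `φ`, maximized over `X` and minimized
over `Y`: the sum of what the two players can gain by deviating unilaterally. The extrema are
encoded as `sSup` and `sInf`, whose values are junk on empty or unbounded sets. -/
noncomputable def saddlePointGap (φ : E → F → ℝ) (X : Set E) (Y : Set F) (x : E) (y : F) : ℝ :=
  sSup ((fun z => φ z y) '' X) - sInf (φ x '' Y)

variable [AddCommGroup E] [Module ℝ E] [AddCommGroup F] [Module ℝ F]

/-- The average of the points `x t`, `t ∈ s`, with equal weights (`0` if `s` is empty). -/
noncomputable def uniformAverage (s : Finset ι) (x : ι → E) : E :=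
  (#s : ℝ)⁻¹ • ∑ t ∈ s, x t

variable {s : Finset ι}

lemma sum_apply_eq_card_mul_apply_uniformAverage (hs : s.Nonempty) (f : E →ₗ[ℝ] ℝ) (x : ι → E) :
    ∑ t ∈ s, f (x t) = #s * f (uniformAverage s x) := by
  have hcard : (#s : ℝ) ≠ 0 := Nat.cast_ne_zero.mpr hs.card_ne_zero
  rw [uniformAverage, map_smul, map_sum, smul_eq_mul, mul_inv_cancel_left₀ hcard]

variable (B : E →ₗ[ℝ] F →ₗ[ℝ] ℝ) {X : Set E} {Y : Set F} (x : ι → E) (y : ι → F)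

lemma cumulativeRegret_neg_eq_card_mul_sSup_sub (hs : s.Nonempty) (hX : X.Nonempty)
    (hbdd : BddAbove ((fun z => B z (uniformAverage s y)) '' X)) :
    cumulativeRegret s (fun t z => -B z (y t)) X x =
      #s * sSup ((fun z => B z (uniformAverage s y)) '' X) - ∑ t ∈ s, B (x t) (y t) := by
  have hloss (z : E) : ∑ t ∈ s, -B z (y t) = -(#s * B z (uniformAverage s y)) := by
    rw [sum_neg_distrib, sum_apply_eq_card_mul_apply_uniformAverage hs]
  have hanti : Antitone fun r : ℝ => -(#s * r) := fun _ _ h => by dsimp only; gcongr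
  have hsup := hanti.map_csSup_of_continuousAt (by fun_prop) (hX.image _) hbdd
  rw [Set.image_image] at hsup
  simp only [cumulativeRegret, hloss, ← hsup, sum_neg_distrib]
  ring

lemma cumulativeRegret_eq_sum_sub_card_mul_sInf (hs : s.Nonempty) (hY : Y.Nonempty)
    (hbdd : BddBelow (B (uniformAverage s x) '' Y)) :
    cumulativeRegret s (fun t => B (x t)) Y y =
      ∑ t ∈ s, B (x t) (y t) - #s * sInf (B (uniformAverage s x) '' Y) := by
  have hloss (w : F) : ∑ t ∈ s, B (x t) w = #s * B (uniformAverage s x) w :=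
    sum_apply_eq_card_mul_apply_uniformAverage hs (B.flip w) x
  have hmono : Monotone fun r : ℝ => #s * r := fun _ _ h => by dsimp only; gcongr
  have hinf := hmono.map_csInf_of_continuousAt (by fun_prop) (hY.image _) hbdd
  rw [Set.image_image] at hinf
  simp only [cumulativeRegret, hloss, ← hinf]

theorem saddle_point_gap_le_avg_regret_general (hs : s.Nonempty)
    (hX : X.Nonempty) (hXbdd : BddAbove ((fun z => B z (uniformAverage s y)) '' X))
    (hY : Y.Nonempty) (hYbdd : BddBelow (B (uniformAverage s x) '' Y)) :
    saddlePointGap (fun z => B z) X Y (uniformAverage s x) (uniformAverage s y) =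
      (cumulativeRegret s (fun t z => -B z (y t)) X x +
        cumulativeRegret s (fun t => B (x t)) Y y) / #s := by
  have hcard : (#s : ℝ) ≠ 0 := Nat.cast_ne_zero.mpr hs.card_ne_zero
  rw [cumulativeRegret_neg_eq_card_mul_sSup_sub B x y hs hX hXbdd,
    cumulativeRegret_eq_sum_sub_card_mul_sInf B x y hs hY hYbdd, saddlePointGap, eq_div_iff hcard]
  ring

end BilinearGame

section MatrixGame

variable {m n : ℕ} (A : Matrix (Fin m) (Fin n) ℝ) (u : Fin m → ℝ) (w : Fin n → ℝ)

lemma dot_mulVec : dot u (A.mulVec w) = Matrix.toLinearMap₂' ℝ A u w :=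
  (Matrix.toLinearMap₂'_apply' A u w).symm

lemma dot_neg_mulVec : dot (-A.mulVec w) u = -Matrix.toLinearMap₂' ℝ A u w := by
  rw [← dot_mulVec]
  exact (neg_dotProduct _ _).trans (congrArg Neg.neg (dotProduct_comm _ _))

lemma dot_transpose_mulVec : dot (A.transpose.mulVec u) w = Matrix.toLinearMap₂' ℝ A u w := by
  rw [← dot_mulVec, Matrix.mulVec_transpose]
  exact (Matrix.dotProduct_mulVec u A w).symm

end MatrixGame

theorem saddle_point_gap_le_avg_regret {m n : ℕ}
    (X : Set (Fin m → ℝ)) (Y : Set (Fin n → ℝ))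
    (hXne : X.Nonempty) (hXc : IsCompact X) (hXconv : Convex ℝ X)
    (hYne : Y.Nonempty) (hYc : IsCompact Y) (hYconv : Convex ℝ Y)
    (A : Matrix (Fin m) (Fin n) ℝ)
    (T : ℕ) (hT : 1 ≤ T)
    (x : ℕ → Fin m → ℝ) (y : ℕ → Fin n → ℝ)
    (hx : ∀ t < T, x t ∈ X) (hy : ∀ t < T, y t ∈ Y)
    -- average decisions
    (xbar : Fin m → ℝ) (hxbar : xbar = (T : ℝ)⁻¹ • ∑ t ∈ Finset.range T, x t)
    (ybar : Fin n → ℝ) (hybar : ybar = (T : ℝ)⁻¹ • ∑ t ∈ Finset.range T, y t)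
    -- cumulative regrets
    (RX RY : ℝ)
    (hRX : RX = (∑ t ∈ Finset.range T, dot (-(A.mulVec (y t))) (x t))
      - sInf ((fun xhat => ∑ t ∈ Finset.range T, dot (-(A.mulVec (y t))) xhat) '' X))
    (hRY : RY = (∑ t ∈ Finset.range T, dot (A.transpose.mulVec (x t)) (y t))
      - sInf ((fun yhat => ∑ t ∈ Finset.range T, dot (A.transpose.mulVec (x t)) yhat) '' Y))
    -- saddle-point gap
    (γ : ℝ)
    (hγ : γ = sSup ((fun xhat => dot xhat (A.mulVec ybar)) '' X)
      - sInf ((fun yhat => dot xbar (A.mulVec yhat)) '' Y)) :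
    γ ≤ (RX + RY) / T := by
  let B : (Fin m → ℝ) →ₗ[ℝ] (Fin n → ℝ) →ₗ[ℝ] ℝ := Matrix.toLinearMap₂' ℝ A
  have hXbdd (w : Fin n → ℝ) : BddAbove ((fun z => B z w) '' X) :=
    hXc.bddAbove_image (B.flip w).continuous_of_finiteDimensional.continuousOn
  have hYbdd (u : Fin m → ℝ) : BddBelow (B u '' Y) :=
    hYc.bddBelow_image (B u).continuous_of_finiteDimensional.continuousOn
  simpa only [saddlePointGap, cumulativeRegret, uniformAverage, Finset.card_range, hxbar, hybar,
    hγ, hRX, hRY, dot_mulVec, dot_neg_mulVec, dot_transpose_mulVec] using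
    (saddle_point_gap_le_avg_regret_general B x y
      (Finset.nonempty_range_iff.mpr (Nat.one_le_iff_ne_zero.mp hT))
      hXne (hXbdd _) hYne (hYbdd _)).le
end

section
/- Let X ⊆ ℝ^m and Y ⊆ ℝ^n be nonempty compact convex sets and A an m×n real matrix. For each T ≥ 1, let x^1,…,x^T ∈ X and y^1,…,y^T ∈ Y (as prefixes of fixed infinite sequences), with averages x̄^T := (1/T) Σ_{t=1}^T x^t and ȳ^T := (1/T) Σ_{t=1}^T y^t, and cumulative regrets R_X^T := Σ_{t=1}^T ⟨−A y^t, x^t⟩ − min_{x̂ ∈ X} Σ_{t=1}^T ⟨−A y^t, x̂⟩ and R_Y^T := Σ_{t=1}^T ⟨Aᵀ x^t, y^t⟩ − min_{ŷ ∈ Y} Σ_{t=1}^T ⟨Aᵀ x^t, ŷ⟩. If R_X^T / T → 0 and R_Y^T / T → 0 as T → ∞, then the saddle-point gap γ(x̄^T, ȳ^T) := max_{x̂ ∈ X} ⟨x̂, A ȳ^T⟩ − min_{ŷ ∈ Y} ⟨x̄^T, A ŷ⟩ converges to 0 as T → ∞. -/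
open Filter

/-!
The bilinear payoff makes the loss `∑ ⟨x t, A (y t)⟩` incurred along the play cancel in the sum of
the two regrets. What is left is the total payoff of the best fixed `x̂` against the plays `y t`
minus that of the best fixed `ŷ` against the plays `x t`, and by bilinearity this is `T` times the
saddle-point gap at the averages. Thus `γ T = (RX T + RY T) / T` exactly.
-/

section Regret

variable {ι E F : Type*}

/-- `R` is the cumulative regret over the rounds `s` of the decisions `z`, with losses `ℓ`, against
the fixed comparators in `Z`. Since it is a least upper bound rather than a difference with an
`sInf`, it has no junk value when `Z` is empty or the losses are unbounded. -/
def IsRegret (ℓ : ι → E → ℝ) (Z : Set E) (z : ι → E) (s : Finset ι) (R : ℝ) : Prop :=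
  IsLUB ((fun u => ∑ t ∈ s, (ℓ t (z t) - ℓ t u)) '' Z) R

/-- `g` is the saddle-point gap at `(p, q)` of the payoff `φ`, which is maximized over `X` and
minimized over `Y`. As a least upper bound over pairs of deviations, it has no junk value when one
of the two best responses has no finite value. -/
def IsSaddlePointGap (φ : E → F → ℝ) (X : Set E) (Y : Set F) (p : E) (q : F) (g : ℝ) : Prop :=
  IsLUB (Set.image2 (fun u v => φ u q - φ p v) X Y) g

theorem isRegret_sub_sInf [TopologicalSpace E] {ℓ : ι → E → ℝ} {Z : Set E} (hZ : IsCompact Z)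
    (hne : Z.Nonempty) (z : ι → E) {s : Finset ι} (hℓ : ∀ t ∈ s, ContinuousOn (ℓ t) Z) :
    IsRegret ℓ Z z s (∑ t ∈ s, ℓ t (z t) - sInf ((fun u => ∑ t ∈ s, ℓ t u) '' Z)) := by
  have hmin := (hZ.image_of_continuousOn (continuousOn_finsetSum s hℓ)).isGLB_sInf (hne.image _)
  simpa only [IsRegret, Finset.sum_sub_distrib, Set.singleton_sub, Set.image_image]
    using (isLUB_singleton (a := ∑ t ∈ s, ℓ t (z t))).sub hmin

theorem isSaddlePointGap_sSup_sub_sInf [TopologicalSpace E] [TopologicalSpace F]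
    {φ : E → F → ℝ} {X : Set E} {Y : Set F} {p : E} {q : F}
    (hX : IsCompact X) (hXne : X.Nonempty) (hφX : ContinuousOn (fun u => φ u q) X)
    (hY : IsCompact Y) (hYne : Y.Nonempty) (hφY : ContinuousOn (φ p) Y) :
    IsSaddlePointGap φ X Y p q (sSup ((fun u => φ u q) '' X) - sInf (φ p '' Y)) := by
  have hmax := (hX.image_of_continuousOn hφX).isLUB_sSup (hXne.image _)
  have hmin := (hY.image_of_continuousOn hφY).isGLB_sInf (hYne.image _)
  simpa only [IsSaddlePointGap, ← Set.image2_sub, Set.image2_image_left, Set.image2_image_right]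
    using hmax.sub hmin

theorem bilin_smul_sum_sub_bilin_smul_sum {R : Type*} [CommRing R]
    [AddCommMonoid E] [Module R E] [AddCommMonoid F] [Module R F] (B : E →ₗ[R] F →ₗ[R] R)
    (c : R) (s : Finset ι) (x : ι → E) (y : ι → F) (u : E) (v : F) :
    B u (c • ∑ t ∈ s, y t) - B (c • ∑ t ∈ s, x t) v =
      c * (∑ t ∈ s, (-B (x t) (y t) - -B u (y t)) + ∑ t ∈ s, (B (x t) (y t) - B (x t) v)) := by
  simp only [map_smul, map_sum, LinearMap.smul_apply, LinearMap.sum_apply, smul_eq_mul,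
    Finset.sum_sub_distrib, Finset.sum_neg_distrib]
  ring

variable [AddCommMonoid E] [Module ℝ E] [AddCommMonoid F] [Module ℝ F]
  {B : E →ₗ[ℝ] F →ₗ[ℝ] ℝ} {X : Set E} {Y : Set F}

open scoped Pointwise in
theorem IsRegret.isSaddlePointGap_smul_sum {x : ι → E} {y : ι → F} {s : Finset ι} {RX RY c : ℝ}
    (hX : IsRegret (fun t u => -B u (y t)) X x s RX)
    (hY : IsRegret (fun t v => B (x t) v) Y y s RY) (hc : 0 ≤ c) :
    IsSaddlePointGap (fun u v => B u v) X Y (c • ∑ t ∈ s, x t) (c • ∑ t ∈ s, y t)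
      (c * (RX + RY)) := by
  have hsum := (IsLUB.add hX hY).mul_left hc
  simpa only [IsSaddlePointGap, bilin_smul_sum_sub_bilin_smul_sum, ← Set.image2_add,
    Set.image2_image_left, Set.image2_image_right, Set.image_image2] using hsum

theorem saddle_point_gap_tendsto_zero_general {x : ℕ → E} {y : ℕ → F} {RX RY γ : ℕ → ℝ}
    (hRX : ∀ T, IsRegret (fun t u => -B u (y t)) X x (Finset.range T) (RX T))
    (hRY : ∀ T, IsRegret (fun t v => B (x t) v) Y y (Finset.range T) (RY T))
    (hRXlim : Tendsto (fun T : ℕ => RX T / T) atTop (nhds 0))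
    (hRYlim : Tendsto (fun T : ℕ => RY T / T) atTop (nhds 0))
    (hγ : ∀ T : ℕ, IsSaddlePointGap (fun u v => B u v) X Y
      ((T : ℝ)⁻¹ • ∑ t ∈ Finset.range T, x t) ((T : ℝ)⁻¹ • ∑ t ∈ Finset.range T, y t) (γ T)) :
    Tendsto γ atTop (nhds 0) := by
  have hγ_eq (T : ℕ) : γ T = RX T / T + RY T / T := by
    have hgap := (hRX T).isSaddlePointGap_smul_sum (hRY T) (inv_nonneg.2 T.cast_nonneg)
    rw [IsLUB.unique (hγ T) hgap, ← add_div, div_eq_inv_mul]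
  simpa only [← hγ_eq, add_zero] using hRXlim.add hRYlim

end Regret

section Matrix

open Matrix

theorem dot_eq_dotProduct {k : ℕ} (u v : Fin k → ℝ) : dot u v = u ⬝ᵥ v := rfl

variable {m n : ℕ} (A : Matrix (Fin m) (Fin n) ℝ)

theorem dot_mulVec_eq_toLinearMap₂' (u : Fin m → ℝ) (v : Fin n → ℝ) :
    dot u (A *ᵥ v) = toLinearMap₂' ℝ A u v := by
  rw [dot_eq_dotProduct, toLinearMap₂'_apply']

theorem dot_neg_mulVec_eq_neg_toLinearMap₂' (u : Fin m → ℝ) (v : Fin n → ℝ) :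
    dot (-(A *ᵥ v)) u = -toLinearMap₂' ℝ A u v := by
  rw [dot_eq_dotProduct, toLinearMap₂'_apply', neg_dotProduct, dotProduct_comm]

theorem dot_transpose_mulVec_eq_toLinearMap₂' (u : Fin m → ℝ) (v : Fin n → ℝ) :
    dot (Aᵀ *ᵥ u) v = toLinearMap₂' ℝ A u v := by
  rw [dot_eq_dotProduct, toLinearMap₂'_apply', dotProduct_mulVec, mulVec_transpose]

theorem continuous_toLinearMap₂'_left (v : Fin n → ℝ) :
    Continuous fun u : Fin m → ℝ => toLinearMap₂' ℝ A u v := by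
  simp only [toLinearMap₂'_apply']
  fun_prop

theorem continuous_toLinearMap₂'_right (u : Fin m → ℝ) :
    Continuous fun v : Fin n → ℝ => toLinearMap₂' ℝ A u v := by
  simp only [toLinearMap₂'_apply']
  fun_prop

variable {ι : Type*} {X : Set (Fin m → ℝ)} {Y : Set (Fin n → ℝ)}

theorem isRegret_dot_neg_mulVec (hX : IsCompact X) (hXne : X.Nonempty)
    (x : ι → Fin m → ℝ) (y : ι → Fin n → ℝ) (s : Finset ι) :
    IsRegret (fun t u => -toLinearMap₂' ℝ A u (y t)) X x s (∑ t ∈ s, dot (-(A *ᵥ y t)) (x t)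
      - sInf ((fun u => ∑ t ∈ s, dot (-(A *ᵥ y t)) u) '' X)) := by
  simp only [dot_neg_mulVec_eq_neg_toLinearMap₂']
  exact isRegret_sub_sInf hX hXne x fun t _ =>
    (continuous_toLinearMap₂'_left A (y t)).neg.continuousOn

theorem isRegret_dot_transpose_mulVec (hY : IsCompact Y) (hYne : Y.Nonempty)
    (x : ι → Fin m → ℝ) (y : ι → Fin n → ℝ) (s : Finset ι) :
    IsRegret (fun t v => toLinearMap₂' ℝ A (x t) v) Y y s (∑ t ∈ s, dot (Aᵀ *ᵥ x t) (y t)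
      - sInf ((fun v => ∑ t ∈ s, dot (Aᵀ *ᵥ x t) v) '' Y)) := by
  simp only [dot_transpose_mulVec_eq_toLinearMap₂']
  exact isRegret_sub_sInf hY hYne y fun t _ =>
    (continuous_toLinearMap₂'_right A (x t)).continuousOn

theorem isSaddlePointGap_dot_mulVec (hX : IsCompact X) (hXne : X.Nonempty)
    (hY : IsCompact Y) (hYne : Y.Nonempty) (p : Fin m → ℝ) (q : Fin n → ℝ) :
    IsSaddlePointGap (fun u v => toLinearMap₂' ℝ A u v) X Y p q
      (sSup ((fun u => dot u (A *ᵥ q)) '' X) - sInf ((fun v => dot p (A *ᵥ v)) '' Y)) := by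
  simp only [dot_mulVec_eq_toLinearMap₂']
  exact isSaddlePointGap_sSup_sub_sInf
    hX hXne (continuous_toLinearMap₂'_left A q).continuousOn
    hY hYne (continuous_toLinearMap₂'_right A p).continuousOn

end Matrix

theorem saddle_point_gap_tendsto_zero {m n : ℕ}
    (X : Set (Fin m → ℝ)) (Y : Set (Fin n → ℝ))
    (hXne : X.Nonempty) (hXc : IsCompact X) (hXconv : Convex ℝ X)
    (hYne : Y.Nonempty) (hYc : IsCompact Y) (hYconv : Convex ℝ Y)
    (A : Matrix (Fin m) (Fin n) ℝ)
    (x : ℕ → Fin m → ℝ) (y : ℕ → Fin n → ℝ)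
    (hx : ∀ t, x t ∈ X) (hy : ∀ t, y t ∈ Y)
    -- average decisions
    (xbar : ℕ → Fin m → ℝ) (hxbar : ∀ T, xbar T = (T : ℝ)⁻¹ • ∑ t ∈ Finset.range T, x t)
    (ybar : ℕ → Fin n → ℝ) (hybar : ∀ T, ybar T = (T : ℝ)⁻¹ • ∑ t ∈ Finset.range T, y t)
    -- cumulative regrets
    (RX RY : ℕ → ℝ)
    (hRX : ∀ T, RX T = (∑ t ∈ Finset.range T, dot (-(A.mulVec (y t))) (x t))
      - sInf ((fun xhat => ∑ t ∈ Finset.range T, dot (-(A.mulVec (y t))) xhat) '' X))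
    (hRY : ∀ T, RY T = (∑ t ∈ Finset.range T, dot (A.transpose.mulVec (x t)) (y t))
      - sInf ((fun yhat => ∑ t ∈ Finset.range T, dot (A.transpose.mulVec (x t)) yhat) '' Y))
    -- vanishing average regret
    (hRXlim : Tendsto (fun T : ℕ => RX T / T) atTop (nhds 0))
    (hRYlim : Tendsto (fun T : ℕ => RY T / T) atTop (nhds 0))
    -- saddle-point gap
    (γ : ℕ → ℝ)
    (hγ : ∀ T, γ T = sSup ((fun xhat => dot xhat (A.mulVec (ybar T))) '' X)
      - sInf ((fun yhat => dot (xbar T) (A.mulVec yhat)) '' Y)) :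
    Tendsto γ atTop (nhds 0) := by
  refine saddle_point_gap_tendsto_zero_general
    (fun T => hRX T ▸ isRegret_dot_neg_mulVec A hXc hXne x y _)
    (fun T => hRY T ▸ isRegret_dot_transpose_mulVec A hYc hYne x y _) hRXlim hRYlim fun T => ?_
  simpa only [hγ, hxbar, hybar] using isSaddlePointGap_dot_mulVec A hXc hXne hYc hYne _ _
end

section
/- Let N ≥ 0 and let Z_0 ⊆ ℝ^{d_0} be a nonempty compact convex set. For each i = 1,…,N, let X_i ⊆ ℝ^{s_i} be a nonempty compact convex set and let h_i be an affine real-valued function on the ambient space of Z_{i−1} that is nonnegative on Z_{i−1}, and define Z_i := Z_{i−1} ⊴^{h_i} X_i. Then for every i = 0,…,N, the set Z_i is nonempty, compact, and convex. -/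
/-- The ambient space `ℝ^{d₀} × ℝ^{s 1} × ⋯ × ℝ^{s i}` (left-associated) of the
`i`-th set in a chain of scaled extensions. -/
def Spc (d₀ : ℕ) (s : ℕ → ℕ) : ℕ → Type
  | 0 => Fin d₀ → ℝ
  | i + 1 => Spc d₀ s i × (Fin (s (i + 1)) → ℝ)

noncomputable instance SpcNormedAddCommGroup (d₀ : ℕ) (s : ℕ → ℕ) :
    ∀ i, NormedAddCommGroup (Spc d₀ s i)
  | 0 => inferInstanceAs (NormedAddCommGroup (Fin d₀ → ℝ))
  | i + 1 =>
    letI := SpcNormedAddCommGroup d₀ s i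
    inferInstanceAs (NormedAddCommGroup (Spc d₀ s i × (Fin (s (i + 1)) → ℝ)))

noncomputable instance SpcNormedSpace (d₀ : ℕ) (s : ℕ → ℕ) :
    ∀ i, NormedSpace ℝ (Spc d₀ s i)
  | 0 => inferInstanceAs (NormedSpace ℝ (Fin d₀ → ℝ))
  | i + 1 =>
    letI := SpcNormedAddCommGroup d₀ s i
    letI := SpcNormedSpace d₀ s i
    inferInstanceAs (NormedSpace ℝ (Spc d₀ s i × (Fin (s (i + 1)) → ℝ)))

/-- The scaled extension `Z ⊴^h X = {(z, h(z) • y) : z ∈ Z, y ∈ X}`. -/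
def scExt {E F : Type*} [SMul ℝ F] (Z : Set E) (X : Set F) (h : E → ℝ) :
    Set (E × F) :=
  {p | ∃ z ∈ Z, ∃ y ∈ X, p = (z, h z • y)}

/-! The fibre of `Z ⊴^h X` over `z ∈ Z` is the dilate `h z • X`. Compactness holds because the
extension is a continuous image of `Z ×ˢ X`. Convexity comes from `(p + q) • X = p • X + q • X`
for convex `X` and `p, q ≥ 0`: as `h` is affine and nonnegative on `Z`, the fibre over a convex
combination of points of `Z` is the same combination of their fibres. -/

section ScaledExtension

open scoped Pointwise

variable {E F : Type*} {Z : Set E} {X : Set F}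

theorem mem_scExt_iff [SMul ℝ F] {h : E → ℝ} {p : E × F} :
    p ∈ scExt Z X h ↔ p.1 ∈ Z ∧ p.2 ∈ h p.1 • X := by
  constructor
  · rintro ⟨z, hz, y, hy, rfl⟩
    exact ⟨hz, Set.smul_mem_smul_set hy⟩
  · rintro ⟨hz, y, hy, hp⟩
    exact ⟨p.1, hz, y, hy, Prod.ext rfl hp.symm⟩

theorem scExt_eq_image_prod [SMul ℝ F] (Z : Set E) (X : Set F) (h : E → ℝ) :
    scExt Z X h = (fun p : E × F => (p.1, h p.1 • p.2)) '' (Z ×ˢ X) := by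
  ext p
  constructor
  · rintro ⟨z, hz, y, hy, rfl⟩
    exact ⟨(z, y), ⟨hz, hy⟩, rfl⟩
  · rintro ⟨⟨z, y⟩, ⟨hz, hy⟩, rfl⟩
    exact ⟨z, hz, y, hy, rfl⟩

theorem scExt_nonempty_iff [SMul ℝ F] {h : E → ℝ} :
    (scExt Z X h).Nonempty ↔ Z.Nonempty ∧ X.Nonempty := by
  rw [scExt_eq_image_prod, Set.image_nonempty, Set.prod_nonempty_iff]

theorem isCompact_scExt [TopologicalSpace E] [TopologicalSpace F] [SMul ℝ F] [ContinuousSMul ℝ F]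
    {h : E → ℝ} (hZ : IsCompact Z) (hX : IsCompact X) (hh : ContinuousOn h Z) :
    IsCompact (scExt Z X h) := by
  have hh_fst : ContinuousOn (fun p : E × F => h p.1) (Z ×ˢ X) :=
    hh.comp continuousOn_fst fun _ hp => hp.1
  rw [scExt_eq_image_prod]
  exact (hZ.prod hX).image_of_continuousOn (continuousOn_fst.prodMk (hh_fst.smul continuousOn_snd))

theorem convex_scExt [AddCommGroup E] [Module ℝ E] [AddCommGroup F] [Module ℝ F]
    (hZ : Convex ℝ Z) (hX : Convex ℝ X) (h : E →ᵃ[ℝ] ℝ) (hh : ∀ z ∈ Z, 0 ≤ h z) :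
    Convex ℝ (scExt Z X h) := by
  intro p hp q hq a b ha hb hab
  rw [mem_scExt_iff] at hp hq ⊢
  refine ⟨hZ hp.1 hq.1 ha hb hab, ?_⟩
  have fibre_eq : h (a • p.1 + b • q.1) • X = a • h p.1 • X + b • h q.1 • X := by
    rw [Convex.combo_affine_apply hab, smul_eq_mul, smul_eq_mul,
      hX.add_smul (mul_nonneg ha (hh _ hp.1)) (mul_nonneg hb (hh _ hq.1)), mul_smul, mul_smul]
  exact fibre_eq ▸ Set.add_mem_add (Set.smul_mem_smul_set hp.2) (Set.smul_mem_smul_set hq.2)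

end ScaledExtension

instance Spc.finiteDimensional (d₀ : ℕ) (s : ℕ → ℕ) : ∀ i, FiniteDimensional ℝ (Spc d₀ s i)
  | 0 => inferInstanceAs (FiniteDimensional ℝ (Fin d₀ → ℝ))
  | i + 1 =>
    haveI := Spc.finiteDimensional d₀ s i
    inferInstanceAs (FiniteDimensional ℝ (Spc d₀ s i × (Fin (s (i + 1)) → ℝ)))

theorem exists_continuousAffineMap_eq_of_finiteDimensional {E : Type*} [AddCommGroup E]
    [Module ℝ E] [TopologicalSpace E] [IsTopologicalAddGroup E] [ContinuousSMul ℝ E] [T2Space E]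
    [FiniteDimensional ℝ E] {h : E → ℝ}
    (hh : ∃ (l : E →ₗ[ℝ] ℝ) (c : ℝ), ∀ z, h z = l z + c) : ∃ f : E →ᴬ[ℝ] ℝ, h = f := by
  obtain ⟨l, c, hlc⟩ := hh
  let f : E →ᵃ[ℝ] ℝ := l.toAffineMap + AffineMap.const ℝ E c
  have hf : Continuous f := l.continuous_of_finiteDimensional.add continuous_const
  exact ⟨⟨f, hf⟩, funext hlc⟩

-- Since `E (i + 1)` is not definitionally a product for a family `E` of types, the map `Φ i`
-- carries the scaled extension into `E (i + 1)`.
theorem chain_scaledExt_nonempty_isCompact_convex_general {E F : ℕ → Type*}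
    [∀ i, AddCommGroup (E i)] [∀ i, Module ℝ (E i)] [∀ i, TopologicalSpace (E i)]
    [∀ i, AddCommGroup (F i)] [∀ i, Module ℝ (F i)] [∀ i, TopologicalSpace (F i)]
    [∀ i, ContinuousSMul ℝ (F i)] (Φ : ∀ i, E i × F (i + 1) →L[ℝ] E (i + 1)) (N : ℕ)
    (X : ∀ i, Set (F i)) (Z : ∀ i, Set (E i)) (h : ∀ i, E i → ℝ)
    (hZ0ne : (Z 0).Nonempty) (hZ0c : IsCompact (Z 0)) (hZ0conv : Convex ℝ (Z 0))
    (hXne : ∀ i, 1 ≤ i → i ≤ N → (X i).Nonempty)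
    (hXc : ∀ i, 1 ≤ i → i ≤ N → IsCompact (X i))
    (hXconv : ∀ i, 1 ≤ i → i ≤ N → Convex ℝ (X i))
    (haff : ∀ i < N, ∃ f : E i →ᴬ[ℝ] ℝ, h i = f)
    (hnn : ∀ i < N, ∀ z ∈ Z i, 0 ≤ h i z)
    (hrec : ∀ i < N, Z (i + 1) = Φ i '' scExt (Z i) (X (i + 1)) (h i)) :
    ∀ i ≤ N, (Z i).Nonempty ∧ IsCompact (Z i) ∧ Convex ℝ (Z i) := by
  intro i
  induction i with
  | zero => exact fun _ => ⟨hZ0ne, hZ0c, hZ0conv⟩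
  | succ i ih =>
    intro hi
    obtain ⟨hne, hc, hconv⟩ := ih (Nat.le_of_succ_le hi)
    obtain ⟨f, hf⟩ := haff i hi
    have hi_pos : 1 ≤ i + 1 := Nat.le_add_left 1 i
    have hf_nonneg : ∀ z ∈ Z i, 0 ≤ f z := hf ▸ hnn i hi
    rw [hrec i hi, hf]
    exact ⟨(scExt_nonempty_iff.2 ⟨hne, hXne _ hi_pos hi⟩).image _,
      (isCompact_scExt hc (hXc _ hi_pos hi) f.continuous.continuousOn).image (Φ i).continuous,
      (convex_scExt hconv (hXconv _ hi_pos hi) f.toAffineMap hf_nonneg).linear_image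
        (Φ i).toLinearMap⟩

theorem chain_scaledExt_nonempty_isCompact_convex
    (d₀ : ℕ) (s : ℕ → ℕ) (N : ℕ)
    (X : (i : ℕ) → Set (Fin (s i) → ℝ))
    (Z : (i : ℕ) → Set (Spc d₀ s i))
    -- `h i` is the affine function used to build `Z (i+1)` from `Z i`
    (h : (i : ℕ) → Spc d₀ s i → ℝ)
    (hZ0ne : (Z 0).Nonempty) (hZ0c : IsCompact (Z 0)) (hZ0conv : Convex ℝ (Z 0))
    (hXne : ∀ i, 1 ≤ i → i ≤ N → (X i).Nonempty)
    (hXc : ∀ i, 1 ≤ i → i ≤ N → IsCompact (X i))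
    (hXconv : ∀ i, 1 ≤ i → i ≤ N → Convex ℝ (X i))
    (haff : ∀ i < N, ∃ (l : Spc d₀ s i →ₗ[ℝ] ℝ) (c : ℝ), ∀ z, h i z = l z + c)
    (hnn : ∀ i < N, ∀ z ∈ Z i, 0 ≤ h i z)
    (hrec : ∀ i < N, Z (i + 1) = scExt (Z i) (X (i + 1)) (h i)) :
    ∀ i ≤ N, (Z i).Nonempty ∧ IsCompact (Z i) ∧ Convex ℝ (Z i) := by
  exact chain_scaledExt_nonempty_isCompact_convex_general
    (fun i => ContinuousLinearMap.id ℝ (Spc d₀ s i × (Fin (s (i + 1)) → ℝ))) N X Z h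
    hZ0ne hZ0c hZ0conv hXne hXc hXconv
    (fun i hi => exists_continuousAffineMap_eq_of_finiteDimensional (haff i hi)) hnn
    fun i hi => (hrec i hi).trans (Set.image_id _).symm
end
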